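/- arXiv:2404.08410 — 4 statements merged into one kernel-verified Lean document; each statement's English description precedes it below -/
import Mathlib

section
/- Let E be a real inner product space, let θ₁, θ₂ ∈ E with ‖θ₁‖ = ‖θ₂‖ = 1, and let 0 < ρ₁ < ρ₂ < 1. Set x₁ = ρ₁θ₁, x₂ = ρ₂θ₂, s₀ = (1 − ρ₁²)/(ρ₂² − ρ₁²), and x₀ = (1 − s₀)x₁ + s₀x₂. Then ‖x₀‖ ≥ (1 + ρ₁ρ₂)/(ρ₁ + ρ₂) > 1; in particular x₀ lies strictly outside the closed unit ball. -/
/-!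
Since `s₀ ≥ 1`, the point `x₀` lies on the line through `x₁` and `x₂` beyond `x₂`, so by convexity
`‖x₀‖` is at least the affine extrapolation `(1 - s₀) * ρ₁ + s₀ * ρ₂` of the norm. The parameter
`s₀` makes the same extrapolation of the squared radii equal to `1`, so multiplying by `ρ₁ + ρ₂`
turns the bound into `1 + ρ₁ * ρ₂`.
-/

section Parameter

variable {K : Type*} [Field K] {r R : K}

/-- The parameter `s₀` of the reflection construction with radii `r` and `R`: the `s` at which
`(1 - s) * r ^ 2 + s * R ^ 2 = 1`. It has the junk value `0` when `r ^ 2 = R ^ 2`. -/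
def reflectionParameter (r R : K) : K :=
  (1 - r ^ 2) / (R ^ 2 - r ^ 2)

lemma reflectionParameter_extrapolates_sq_to_one (h : r ^ 2 ≠ R ^ 2) :
    (1 - reflectionParameter r R) * r ^ 2 + reflectionParameter r R * R ^ 2 = 1 := by
  have hmul : reflectionParameter r R * (R ^ 2 - r ^ 2) = 1 - r ^ 2 :=
    div_mul_cancel₀ _ (sub_ne_zero.mpr h.symm)
  linear_combination hmul

lemma reflectionParameter_extrapolation_eq_div (h : r ^ 2 ≠ R ^ 2) :
    (1 - reflectionParameter r R) * r + reflectionParameter r R * R = (1 + r * R) / (r + R) := by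
  have hsum : r + R ≠ 0 := fun h₀ ↦ h (by linear_combination (r - R) * h₀)
  rw [eq_div_iff hsum]
  linear_combination reflectionParameter_extrapolates_sq_to_one h

variable [LinearOrder K] [IsStrictOrderedRing K]

lemma one_le_reflectionParameter (h : r ^ 2 < R ^ 2) (hR : R ^ 2 ≤ 1) :
    1 ≤ reflectionParameter r R :=
  (one_le_div (sub_pos.mpr h)).mpr (sub_le_sub_right hR _)

lemma one_lt_one_add_mul_div_add (hr : r < 1) (hR : R < 1) (hsum : 0 < r + R) :
    1 < (1 + r * R) / (r + R) := by
  rw [one_lt_div hsum]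
  have : 0 < (1 - r) * (1 - R) := mul_pos (sub_pos.mpr hr) (sub_pos.mpr hR)
  linarith

end Parameter

section Norm

variable {E : Type*} [SeminormedAddCommGroup E] [NormedSpace ℝ E]

lemma extrapolation_norm_le_norm_extrapolation {s : ℝ} (hs : 1 ≤ s) (x y : E) :
    (1 - s) * ‖x‖ + s * ‖y‖ ≤ ‖(1 - s) • x + s • y‖ :=
  calc (1 - s) * ‖x‖ + s * ‖y‖ = ‖s • y‖ - ‖(s - 1) • x‖ := by
        rw [norm_smul_of_nonneg (by linarith), norm_smul_of_nonneg (by linarith)]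
        ring
    _ ≤ ‖s • y - (s - 1) • x‖ := norm_sub_norm_le _ _
    _ = ‖(1 - s) • x + s • y‖ := by
        congr 1
        module

/-- The center `x₀` of the reflection construction for points `x` and `y` assigned the radii `r` and
`R`, which need not be their norms. -/
noncomputable def reflectionCenter (r R : ℝ) (x y : E) : E :=
  (1 - reflectionParameter r R) • x + reflectionParameter r R • y

variable {r R : ℝ} {x y : E}

lemma div_le_norm_reflectionCenter (hx : ‖x‖ ≤ r) (hy : R ≤ ‖y‖) (hrR : r < R) (hR : R ≤ 1) :
    (1 + r * R) / (r + R) ≤ ‖reflectionCenter r R x y‖ := by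
  have hr : 0 ≤ r := (norm_nonneg x).trans hx
  have hsq : r ^ 2 < R ^ 2 := pow_lt_pow_left₀ hrR hr two_ne_zero
  have hs : 1 ≤ reflectionParameter r R :=
    one_le_reflectionParameter hsq (pow_le_one₀ (hr.trans hrR.le) hR)
  rw [← reflectionParameter_extrapolation_eq_div hsq.ne]
  calc _ ≤ (1 - reflectionParameter r R) * ‖x‖ + reflectionParameter r R * ‖y‖ :=
        add_le_add (mul_le_mul_of_nonpos_left hx (sub_nonpos.mpr hs))
          (mul_le_mul_of_nonneg_left hy (zero_le_one.trans hs))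
    _ ≤ _ := extrapolation_norm_le_norm_extrapolation hs x y

theorem stmt_7_general (hx : ‖x‖ ≤ r) (hy : R ≤ ‖y‖) (hrR : r < R) (hR : R < 1) :
    (1 + r * R) / (r + R) ≤ ‖reflectionCenter r R x y‖ ∧ 1 < (1 + r * R) / (r + R) := by
  have hr : 0 ≤ r := (norm_nonneg x).trans hx
  exact ⟨div_le_norm_reflectionCenter hx hy hrR hR.le,
    one_lt_one_add_mul_div_add (hrR.trans hR) hR (by linarith)⟩

end Norm

theorem stmt_7 {E : Type*} [NormedAddCommGroup E] [InnerProductSpace ℝ E]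
    (θ₁ θ₂ : E) (hθ₁ : ‖θ₁‖ = 1) (hθ₂ : ‖θ₂‖ = 1)
    (ρ₁ ρ₂ : ℝ) (h0 : 0 < ρ₁) (h12 : ρ₁ < ρ₂) (h21 : ρ₂ < 1)
    (x₁ x₂ : E) (hx₁ : x₁ = ρ₁ • θ₁) (hx₂ : x₂ = ρ₂ • θ₂)
    (s₀ : ℝ) (hs₀ : s₀ = (1 - ρ₁ ^ 2) / (ρ₂ ^ 2 - ρ₁ ^ 2))
    (x₀ : E) (hx₀ : x₀ = (1 - s₀) • x₁ + s₀ • x₂) :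
    ‖x₀‖ ≥ (1 + ρ₁ * ρ₂) / (ρ₁ + ρ₂) ∧ (1 + ρ₁ * ρ₂) / (ρ₁ + ρ₂) > 1 := by
  have hnorm₁ : ‖x₁‖ = ρ₁ := by rw [hx₁, norm_smul_of_nonneg h0.le, hθ₁, mul_one]
  have hnorm₂ : ‖x₂‖ = ρ₂ := by rw [hx₂, norm_smul_of_nonneg (h0.trans h12).le, hθ₂, mul_one]
  rw [hx₀, hs₀]
  exact stmt_7_general hnorm₁.le hnorm₂.ge h12 h21
end

section
/- Let E be a real inner product space, let θ₁, θ₂ ∈ E with ‖θ₁‖ = ‖θ₂‖ = 1, and let 0 < ρ₁ < ρ₂ < 1. Set x₁ = ρ₁θ₁, x₂ = ρ₂θ₂, and s₀ = (1 − ρ₁²)/(ρ₂² − ρ₁²). Then s₀(s₀ − 1)·‖x₂ − x₁‖² = ((1 − ρ₁²)(1 − ρ₂²)/(ρ₁ + ρ₂)²)·(1 + ρ₁ρ₂·‖θ₂ − θ₁‖²/(ρ₂ − ρ₁)²). -/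
/-!
Expanding the inner products splits `‖x₂ - x₁‖²` into the radial part `(ρ₂ - ρ₁)²` and the angular
part `ρ₁ * ρ₂ * ‖θ₂ - θ₁‖²`. The parameter `s₀` is the one at which the affine interpolation from
`ρ₁²` (at `0`) to `ρ₂²` (at `1`) takes the value `1`, so `s₀ * (s₀ - 1)` has denominator
`(ρ₂² - ρ₁²)² = (ρ₂ - ρ₁)² * (ρ₁ + ρ₂)²`, whose first factor normalizes the radial part to `1`.
-/

theorem norm_smul_sub_smul_sq_real {E : Type*} [SeminormedAddCommGroup E] [InnerProductSpace ℝ E]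
    (a b : ℝ) (x y : E) :
    ‖a • x - b • y‖ ^ 2 = (a - b) * (a * ‖x‖ ^ 2 - b * ‖y‖ ^ 2) + a * b * ‖x - y‖ ^ 2 := by
  rw [norm_sub_sq_real, norm_sub_sq_real, real_inner_smul_left, real_inner_smul_right,
    norm_smul, norm_smul, mul_pow, mul_pow, Real.norm_eq_abs, Real.norm_eq_abs, sq_abs, sq_abs]
  ring

theorem sub_div_sub_mul_sub_div_sub_sub_one {K : Type*} [Field K] {a b : K} (hab : a ≠ b) (c : K) :
    (c - a) / (b - a) * ((c - a) / (b - a) - 1) = (c - a) * (c - b) / (b - a) ^ 2 := by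
  rw [div_sub_one (sub_ne_zero.mpr hab.symm), sub_sub_sub_cancel_right, div_mul_div_comm, ← sq]

theorem stmt_8_general {E : Type*} [SeminormedAddCommGroup E] [InnerProductSpace ℝ E]
    (θ₁ θ₂ : E) (hθ₁ : ‖θ₁‖ = 1) (hθ₂ : ‖θ₂‖ = 1)
    (ρ₁ ρ₂ : ℝ) (hρ : ρ₁ ^ 2 ≠ ρ₂ ^ 2)
    (x₁ x₂ : E) (hx₁ : x₁ = ρ₁ • θ₁) (hx₂ : x₂ = ρ₂ • θ₂)
    (s₀ : ℝ) (hs₀ : s₀ = (1 - ρ₁ ^ 2) / (ρ₂ ^ 2 - ρ₁ ^ 2)) :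
    s₀ * (s₀ - 1) * ‖x₂ - x₁‖ ^ 2 =
      ((1 - ρ₁ ^ 2) * (1 - ρ₂ ^ 2) / (ρ₁ + ρ₂) ^ 2) *
        (1 + ρ₁ * ρ₂ * ‖θ₂ - θ₁‖ ^ 2 / (ρ₂ - ρ₁) ^ 2) := by
  have hfactor : ρ₂ ^ 2 - ρ₁ ^ 2 = (ρ₁ + ρ₂) * (ρ₂ - ρ₁) := by ring
  obtain ⟨hadd, hsub⟩ : ρ₁ + ρ₂ ≠ 0 ∧ ρ₂ - ρ₁ ≠ 0 :=
    mul_ne_zero_iff.mp (hfactor ▸ sub_ne_zero.mpr hρ.symm)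
  have hparam : s₀ * (s₀ - 1) =
      (1 - ρ₁ ^ 2) * (1 - ρ₂ ^ 2) / ((ρ₁ + ρ₂) * (ρ₂ - ρ₁)) ^ 2 := by
    rw [hs₀, sub_div_sub_mul_sub_div_sub_sub_one hρ, hfactor]
  have hnorm : ‖x₂ - x₁‖ ^ 2 = (ρ₂ - ρ₁) ^ 2 + ρ₁ * ρ₂ * ‖θ₂ - θ₁‖ ^ 2 := by
    rw [hx₁, hx₂, norm_smul_sub_smul_sq_real, hθ₁, hθ₂]
    ring
  rw [hparam, hnorm]
  field_simp

theorem stmt_8 {E : Type*} [NormedAddCommGroup E] [InnerProductSpace ℝ E]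
    (θ₁ θ₂ : E) (hθ₁ : ‖θ₁‖ = 1) (hθ₂ : ‖θ₂‖ = 1)
    (ρ₁ ρ₂ : ℝ) (h0 : 0 < ρ₁) (h12 : ρ₁ < ρ₂) (h21 : ρ₂ < 1)
    (x₁ x₂ : E) (hx₁ : x₁ = ρ₁ • θ₁) (hx₂ : x₂ = ρ₂ • θ₂)
    (s₀ : ℝ) (hs₀ : s₀ = (1 - ρ₁ ^ 2) / (ρ₂ ^ 2 - ρ₁ ^ 2)) :
    s₀ * (s₀ - 1) * ‖x₂ - x₁‖ ^ 2 =
      ((1 - ρ₁ ^ 2) * (1 - ρ₂ ^ 2) / (ρ₁ + ρ₂) ^ 2) *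
        (1 + ρ₁ * ρ₂ * ‖θ₂ - θ₁‖ ^ 2 / (ρ₂ - ρ₁) ^ 2) :=
  have hρ : ρ₁ ^ 2 < ρ₂ ^ 2 := pow_lt_pow_left₀ h12 h0.le two_ne_zero
  stmt_8_general θ₁ θ₂ hθ₁ hθ₂ ρ₁ ρ₂ hρ.ne x₁ x₂ hx₁ hx₂ s₀ hs₀
end

section
/- Let E be a real inner product space, let θ₁, θ₂ ∈ E with ‖θ₁‖ = ‖θ₂‖ = 1, and let 0 < ρ₊ < ρ₁ < ρ₂ < 1. Set s₀ = (1 − ρ₁²)/(ρ₂² − ρ₁²). If (ρ₂ − ρ₁)² · ((ρ₊⁻¹ − ρ₊)² − (ρ₁⁻¹ − ρ₁)²) ≥ ρ₁ρ₂(ρ₁⁻¹ − ρ₁)² · ‖θ₂ − θ₁‖², then s₀(s₀ − 1)·‖ρ₂θ₂ − ρ₁θ₁‖² ≤ (1/4)(ρ₊⁻¹ − ρ₊)². -/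
/-!
With `d = ρ₂ - ρ₁`, `A = (ρ₁⁻¹ - ρ₁) ^ 2`, `K = (ρ₊⁻¹ - ρ₊) ^ 2` and `N = ‖ρ₂ • θ₂ - ρ₁ • θ₁‖ ^ 2`,
the identity `N = d ^ 2 + ρ₁ * ρ₂ * ‖θ₂ - θ₁‖ ^ 2` turns the comparison condition into
`A * N ≤ d ^ 2 * K`. In the radial case `θ₁ = θ₂` the squared radius is `s₀ * (s₀ - 1) * d ^ 2`,
which is at most `A / 4`. Multiplying this radial bound by `N` and cancelling `d ^ 2` gives the
general one.
-/

/-- The parameter `s₀` of the reflection construction for the radii `a` and `b`; it is meaningful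
for `a ^ 2 ≠ b ^ 2`. -/
noncomputable def reflectionParam (a b : ℝ) : ℝ :=
  (1 - a ^ 2) / (b ^ 2 - a ^ 2)

section Radii

variable {a b : ℝ}

theorem reflectionParam_mul_sub_one (hab : a ^ 2 ≠ b ^ 2) :
    reflectionParam a b * (reflectionParam a b - 1) =
      (1 - a ^ 2) * (1 - b ^ 2) / (b ^ 2 - a ^ 2) ^ 2 := by
  have hne : b ^ 2 - a ^ 2 ≠ 0 := sub_ne_zero.mpr hab.symm
  unfold reflectionParam
  field_simp
  ring

theorem reflectionParam_mul_sub_one_mul_sub_sq_le (ha : 0 < a) (ha1 : a ≤ 1) (hab : a < b) :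
    reflectionParam a b * (reflectionParam a b - 1) * (b - a) ^ 2 ≤ (a⁻¹ - a) ^ 2 / 4 := by
  have hsq : a ^ 2 < b ^ 2 := pow_lt_pow_left₀ hab ha.le two_ne_zero
  have ha_sq : 0 ≤ 1 - a ^ 2 := sub_nonneg.mpr (pow_le_one₀ ha.le ha1)
  have hsub : b - a ≠ 0 := (sub_pos.mpr hab).ne'
  have hadd : b + a ≠ 0 := by linarith
  calc reflectionParam a b * (reflectionParam a b - 1) * (b - a) ^ 2
      = (1 - a ^ 2) * (1 - b ^ 2) / (b + a) ^ 2 := by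
        rw [reflectionParam_mul_sub_one hsq.ne, sq_sub_sq]
        field_simp
    _ ≤ (1 - a ^ 2) * (1 - a ^ 2) / (2 * a) ^ 2 := by
        gcongr
        linarith
    _ = (a⁻¹ - a) ^ 2 / 4 := by
        field_simp
        ring

end Radii

section InnerProductSpace

variable {E : Type*} [SeminormedAddCommGroup E] [InnerProductSpace ℝ E]

theorem norm_smul_sub_smul_sq (a b : ℝ) (x y : E) :
    ‖b • y - a • x‖ ^ 2 =
      (b - a) * (b * ‖y‖ ^ 2 - a * ‖x‖ ^ 2) + a * b * ‖y - x‖ ^ 2 := by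
  simp only [norm_sub_sq_real, norm_smul, real_inner_smul_left, real_inner_smul_right, mul_pow,
    Real.norm_eq_abs, sq_abs]
  ring

theorem stmt_10_general (θ₁ θ₂ : E) (hθ₁ : ‖θ₁‖ = 1) (hθ₂ : ‖θ₂‖ = 1)
    (ρ₁ ρ₂ K : ℝ) (h0 : 0 < ρ₁) (h11 : ρ₁ ≤ 1) (h12 : ρ₁ < ρ₂)
    (hyp : (ρ₂ - ρ₁) ^ 2 * (K - (ρ₁⁻¹ - ρ₁) ^ 2) ≥
      ρ₁ * ρ₂ * (ρ₁⁻¹ - ρ₁) ^ 2 * ‖θ₂ - θ₁‖ ^ 2) :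
    reflectionParam ρ₁ ρ₂ * (reflectionParam ρ₁ ρ₂ - 1) * ‖ρ₂ • θ₂ - ρ₁ • θ₁‖ ^ 2 ≤
      (1 / 4) * K := by
  set S := reflectionParam ρ₁ ρ₂ * (reflectionParam ρ₁ ρ₂ - 1)
  set N := ‖ρ₂ • θ₂ - ρ₁ • θ₁‖ ^ 2 with hN
  have norm_eq : N = (ρ₂ - ρ₁) ^ 2 + ρ₁ * ρ₂ * ‖θ₂ - θ₁‖ ^ 2 := by
    rw [hN, norm_smul_sub_smul_sq, hθ₁, hθ₂]
    ring
  have comparison : (ρ₁⁻¹ - ρ₁) ^ 2 * N ≤ (ρ₂ - ρ₁) ^ 2 * K := by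
    rw [norm_eq]
    linarith
  have radial_bound : S * (ρ₂ - ρ₁) ^ 2 ≤ (ρ₁⁻¹ - ρ₁) ^ 2 / 4 :=
    reflectionParam_mul_sub_one_mul_sub_sq_le h0 h11 h12
  have hd : 0 < (ρ₂ - ρ₁) ^ 2 := pow_pos (sub_pos.mpr h12) 2
  refine le_of_mul_le_mul_left ?_ hd
  calc (ρ₂ - ρ₁) ^ 2 * (S * N) = S * (ρ₂ - ρ₁) ^ 2 * N := by ring
    _ ≤ (ρ₁⁻¹ - ρ₁) ^ 2 / 4 * N := by gcongr
    _ = (ρ₁⁻¹ - ρ₁) ^ 2 * N / 4 := by ring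
    _ ≤ (ρ₂ - ρ₁) ^ 2 * K / 4 := by gcongr
    _ = (ρ₂ - ρ₁) ^ 2 * (1 / 4 * K) := by ring

end InnerProductSpace

theorem stmt_10 {E : Type*} [NormedAddCommGroup E] [InnerProductSpace ℝ E]
    (θ₁ θ₂ : E) (hθ₁ : ‖θ₁‖ = 1) (hθ₂ : ‖θ₂‖ = 1)
    (ρp ρ₁ ρ₂ : ℝ) (h0 : 0 < ρp) (hp1 : ρp < ρ₁) (h12 : ρ₁ < ρ₂) (h21 : ρ₂ < 1)
    (s₀ : ℝ) (hs₀ : s₀ = (1 - ρ₁ ^ 2) / (ρ₂ ^ 2 - ρ₁ ^ 2))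
    (hyp : (ρ₂ - ρ₁) ^ 2 * ((ρp⁻¹ - ρp) ^ 2 - (ρ₁⁻¹ - ρ₁) ^ 2) ≥
      ρ₁ * ρ₂ * (ρ₁⁻¹ - ρ₁) ^ 2 * ‖θ₂ - θ₁‖ ^ 2) :
    s₀ * (s₀ - 1) * ‖ρ₂ • θ₂ - ρ₁ • θ₁‖ ^ 2 ≤ (1 / 4) * (ρp⁻¹ - ρp) ^ 2 := by
  subst hs₀
  exact stmt_10_general θ₁ θ₂ hθ₁ hθ₂ ρ₁ ρ₂ _ (h0.trans hp1) (h12.trans h21).le h12 hyp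
end

section
/- Let E be a real inner product space, let θ₁, θ₂ ∈ E with ‖θ₁‖ = ‖θ₂‖ = 1, and let 0 < ρ₊ < ρ₁ < ρ₂ < 1 satisfy (ρ₂ − ρ₁)² · ((ρ₊⁻¹ − ρ₊)² − (ρ₁⁻¹ − ρ₁)²) ≥ ρ₁ρ₂(ρ₁⁻¹ − ρ₁)² · ‖θ₂ − θ₁‖². Then there exist c ∈ E and R > 0 such that ‖c‖² = R² + 1, ‖c‖ − R ≥ ρ₊, and the inversion F(x) = (R²/‖x − c‖²)(x − c) + c maps ρ₂θ₂ to ρ₁θ₁. -/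
/-!
In the Poincaré ball, the perpendicular bisector of two points `x` and `y` with `‖x‖ ≠ ‖y‖` is
carried by a sphere orthogonal to the unit sphere. Its center lies on the line through `x` and `y`,
say at `c = (1 - t) x + t y`, and inversion in a sphere about `c` exchanges `x` and `y` only if its
radius satisfies `R² = t (t - 1) ‖x - y‖²`. Stewart's theorem then reads
`‖c‖² = ‖x‖² + t (‖y‖² - ‖x‖²) + R²`, so the orthogonality condition `‖c‖² = R² + 1` determines `t`.
Orthogonality also turns `ρ ≤ ‖c‖ - R` into `2 R ≤ ρ⁻¹ - ρ`, while for `‖x‖ < ‖y‖` the inequalities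
`√((1 - ‖x‖²) (1 - ‖y‖²)) ≤ 1 - ‖x‖²` and `2 ‖x‖ ≤ ‖x‖ + ‖y‖` bound `2 R` by
`(‖x‖⁻¹ - ‖x‖) ‖x - y‖ / (‖y‖ - ‖x‖)`.
-/

open AffineMap EuclideanGeometry

section InnerProduct

variable {V P : Type*} [NormedAddCommGroup V] [InnerProductSpace ℝ V] [MetricSpace P]
  [NormedAddTorsor V P]

theorem dist_sq_lineMap (p x y : P) (t : ℝ) :
    dist p (lineMap x y t) ^ 2 =
      (1 - t) * dist p x ^ 2 + t * dist p y ^ 2 - t * (1 - t) * dist x y ^ 2 := by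
  have hline : lineMap x y t -ᵥ p = (x -ᵥ p) + t • ((y -ᵥ p) - (x -ᵥ p)) := by
    rw [lineMap_apply, vsub_sub_vsub_cancel_right, vadd_vsub_assoc, add_comm]
  rw [dist_comm p, dist_comm p, dist_comm p, dist_eq_norm_vsub V, dist_eq_norm_vsub V,
    dist_eq_norm_vsub V, dist_eq_norm_vsub V, hline, ← vsub_sub_vsub_cancel_right x y p,
    norm_add_sq_real, norm_smul, mul_pow, Real.norm_eq_abs, sq_abs, real_inner_smul_right,
    inner_sub_right, real_inner_self_eq_norm_sq, norm_sub_rev, norm_sub_sq_real]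
  ring

theorem inversion_lineMap_right_eq_left {x y : P} {t R : ℝ} (ht : t ≠ 1)
    (hR : R ^ 2 = t * (t - 1) * dist x y ^ 2) : inversion (lineMap x y t) R y = x := by
  rcases eq_or_ne x y with rfl | hxy
  · simp
  have hdist : dist x y ≠ 0 := dist_ne_zero.2 hxy
  have ht' : 1 - t ≠ 0 := sub_ne_zero.2 ht.symm
  have hratio : (R / dist y (lineMap x y t)) ^ 2 * (1 - t) = -t := by
    rw [dist_right_lineMap, div_pow, mul_pow, Real.norm_eq_abs, sq_abs, hR]
    field_simp
    ring
  rw [inversion, right_vsub_lineMap, smul_smul, hratio, neg_smul, ← smul_neg, neg_vsub_eq_vsub_rev,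
    ← left_vsub_lineMap, vsub_vadd]

theorem dist_sq_smul_smul_of_norm_eq {v w : V} (h : ‖v‖ = ‖w‖) (a b : ℝ) :
    dist (a • v) (b • w) ^ 2 = (b - a) ^ 2 * ‖v‖ ^ 2 + a * b * ‖w - v‖ ^ 2 := by
  rw [dist_eq_norm, norm_sub_sq_real, norm_sub_sq_real, norm_smul, norm_smul, mul_pow, mul_pow,
    Real.norm_eq_abs, Real.norm_eq_abs, sq_abs, sq_abs, real_inner_smul_left,
    real_inner_smul_right, real_inner_comm, h]
  ring

end InnerProduct

theorem le_sub_iff_two_mul_le_inv_sub {s R ρ : ℝ} (hs : 0 ≤ s) (hR : 0 ≤ R) (hρ : 0 < ρ)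
    (h : s ^ 2 = R ^ 2 + 1) : ρ ≤ s - R ↔ 2 * R ≤ ρ⁻¹ - ρ := by
  have hinv : ρ⁻¹ - ρ = (1 - ρ ^ 2) / ρ := by field_simp
  rw [le_sub_iff_add_le, ← sq_le_sq₀ (by positivity) hs, h, hinv, le_div_iff₀ hρ]
  constructor <;> intro <;> linarith

section HyperbolicBisector

variable {E : Type*} [NormedAddCommGroup E]

/-- The Euclidean center of the sphere that carries the perpendicular bisector of `x` and `y` in the
Poincaré ball. Meaningful only for `‖x‖ ≠ ‖y‖`: otherwise the bisector is a hyperplane. -/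
noncomputable def hyperbolicBisectorCenter [InnerProductSpace ℝ E] (x y : E) : E :=
  lineMap x y ((1 - ‖x‖ ^ 2) / (‖y‖ ^ 2 - ‖x‖ ^ 2))

/-- The Euclidean radius of the sphere that carries the perpendicular bisector of `x` and `y` in the
Poincaré ball, centered at `hyperbolicBisectorCenter x y`. Meaningful only for `‖x‖ ≠ ‖y‖`. -/
noncomputable def hyperbolicBisectorRadius (x y : E) : ℝ :=
  √((1 - ‖x‖ ^ 2) * (1 - ‖y‖ ^ 2)) * dist x y / |‖y‖ ^ 2 - ‖x‖ ^ 2|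

variable {x y : E}

theorem sq_norm_sub_sq_norm_ne_zero (hxy : ‖x‖ ≠ ‖y‖) : ‖y‖ ^ 2 - ‖x‖ ^ 2 ≠ 0 := by
  rwa [sub_ne_zero, Ne, sq_eq_sq₀ (norm_nonneg y) (norm_nonneg x), eq_comm]

theorem one_sub_sq_norm_pos (hx : ‖x‖ < 1) : 0 < 1 - ‖x‖ ^ 2 :=
  sub_pos.2 (pow_lt_one₀ (norm_nonneg x) hx two_ne_zero)

theorem hyperbolicBisectorRadius_pos (hx : ‖x‖ < 1) (hy : ‖y‖ < 1) (hxy : ‖x‖ ≠ ‖y‖) :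
    0 < hyperbolicBisectorRadius x y := by
  have hdist : 0 < dist x y := dist_pos.2 (ne_of_apply_ne norm hxy)
  have := one_sub_sq_norm_pos hx
  have := one_sub_sq_norm_pos hy
  have := abs_pos.2 (sq_norm_sub_sq_norm_ne_zero hxy)
  unfold hyperbolicBisectorRadius
  positivity

theorem hyperbolicBisectorRadius_sq (hx : ‖x‖ < 1) (hy : ‖y‖ < 1) (hxy : ‖x‖ ≠ ‖y‖) :
    hyperbolicBisectorRadius x y ^ 2 =
      (1 - ‖x‖ ^ 2) / (‖y‖ ^ 2 - ‖x‖ ^ 2) * ((1 - ‖x‖ ^ 2) / (‖y‖ ^ 2 - ‖x‖ ^ 2) - 1) *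
        dist x y ^ 2 := by
  have hsub := sq_norm_sub_sq_norm_ne_zero hxy
  have hprod := mul_pos (one_sub_sq_norm_pos hx) (one_sub_sq_norm_pos hy)
  rw [hyperbolicBisectorRadius, div_pow, mul_pow, Real.sq_sqrt hprod.le, sq_abs]
  field_simp
  ring

theorem two_mul_hyperbolicBisectorRadius_le (hx : 0 < ‖x‖) (hxy : ‖x‖ < ‖y‖) (hy : ‖y‖ < 1) :
    2 * hyperbolicBisectorRadius x y ≤ (‖x‖⁻¹ - ‖x‖) * dist x y / (‖y‖ - ‖x‖) := by
  have hsub : 0 < ‖y‖ - ‖x‖ := sub_pos.2 hxy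
  have hx1 : 0 < 1 - ‖x‖ ^ 2 := one_sub_sq_norm_pos (hxy.trans hy)
  have hsqrt : √((1 - ‖x‖ ^ 2) * (1 - ‖y‖ ^ 2)) ≤ 1 - ‖x‖ ^ 2 := by
    rw [Real.sqrt_le_left hx1.le, sq (1 - ‖x‖ ^ 2)]
    gcongr
  have hfactor : |‖y‖ ^ 2 - ‖x‖ ^ 2| = (‖y‖ + ‖x‖) * (‖y‖ - ‖x‖) := by
    rw [sq_sub_sq, abs_of_pos (by positivity)]
  calc 2 * hyperbolicBisectorRadius x y
      = √((1 - ‖x‖ ^ 2) * (1 - ‖y‖ ^ 2)) * (2 / (‖y‖ + ‖x‖)) * dist x y / (‖y‖ - ‖x‖) := by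
        rw [hyperbolicBisectorRadius, hfactor]
        field_simp
    _ ≤ (1 - ‖x‖ ^ 2) * ‖x‖⁻¹ * dist x y / (‖y‖ - ‖x‖) := by
        gcongr
        rw [div_le_iff₀ (by positivity), inv_mul_eq_div, le_div_iff₀ hx]
        linarith
    _ = (‖x‖⁻¹ - ‖x‖) * dist x y / (‖y‖ - ‖x‖) := by
        field_simp

variable [InnerProductSpace ℝ E]

theorem sq_norm_hyperbolicBisectorCenter (hx : ‖x‖ < 1) (hy : ‖y‖ < 1) (hxy : ‖x‖ ≠ ‖y‖) :
    ‖hyperbolicBisectorCenter x y‖ ^ 2 = hyperbolicBisectorRadius x y ^ 2 + 1 := by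
  have hsub := sq_norm_sub_sq_norm_ne_zero hxy
  rw [hyperbolicBisectorRadius_sq hx hy hxy, hyperbolicBisectorCenter, ← dist_zero_left,
    dist_sq_lineMap, dist_zero_left, dist_zero_left]
  field_simp
  ring

theorem inversion_hyperbolicBisector (hx : ‖x‖ < 1) (hy : ‖y‖ < 1) (hxy : ‖x‖ ≠ ‖y‖) :
    inversion (hyperbolicBisectorCenter x y) (hyperbolicBisectorRadius x y) y = x := by
  refine inversion_lineMap_right_eq_left ?_ (hyperbolicBisectorRadius_sq hx hy hxy)
  rw [Ne, div_eq_one_iff_eq (sq_norm_sub_sq_norm_ne_zero hxy), sub_left_inj]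
  exact (sub_pos.1 (one_sub_sq_norm_pos hy)).ne'

theorem le_norm_hyperbolicBisectorCenter_sub_radius {ρ : ℝ} (hρ : 0 < ρ) (hx : 0 < ‖x‖)
    (hxy : ‖x‖ < ‖y‖) (hy : ‖y‖ < 1)
    (h : (‖x‖⁻¹ - ‖x‖) * dist x y ≤ (‖y‖ - ‖x‖) * (ρ⁻¹ - ρ)) :
    ρ ≤ ‖hyperbolicBisectorCenter x y‖ - hyperbolicBisectorRadius x y := by
  have hx1 : ‖x‖ < 1 := hxy.trans hy
  rw [le_sub_iff_two_mul_le_inv_sub (norm_nonneg _) (hyperbolicBisectorRadius_pos hx1 hy hxy.ne).le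
    hρ (sq_norm_hyperbolicBisectorCenter hx1 hy hxy.ne)]
  exact (two_mul_hyperbolicBisectorRadius_le hx hxy hy).trans
    ((div_le_iff₀' (sub_pos.2 hxy)).2 h)

end HyperbolicBisector

theorem stmt_13 {E : Type*} [NormedAddCommGroup E] [InnerProductSpace ℝ E]
    (θ₁ θ₂ : E) (hθ₁ : ‖θ₁‖ = 1) (hθ₂ : ‖θ₂‖ = 1)
    (ρp ρ₁ ρ₂ : ℝ) (h0 : 0 < ρp) (hp1 : ρp < ρ₁) (h12 : ρ₁ < ρ₂) (h21 : ρ₂ < 1)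
    (hyp : (ρ₂ - ρ₁) ^ 2 * ((ρp⁻¹ - ρp) ^ 2 - (ρ₁⁻¹ - ρ₁) ^ 2) ≥
      ρ₁ * ρ₂ * (ρ₁⁻¹ - ρ₁) ^ 2 * ‖θ₂ - θ₁‖ ^ 2) :
    ∃ (c : E) (R : ℝ), 0 < R ∧ ‖c‖ ^ 2 = R ^ 2 + 1 ∧ ‖c‖ - R ≥ ρp ∧
      (R ^ 2 / ‖ρ₂ • θ₂ - c‖ ^ 2) • (ρ₂ • θ₂ - c) + c = ρ₁ • θ₁ := by
  have hρ₁ : 0 < ρ₁ := h0.trans hp1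
  have hx : ‖ρ₁ • θ₁‖ = ρ₁ := by rw [norm_smul_of_nonneg hρ₁.le, hθ₁, mul_one]
  have hy : ‖ρ₂ • θ₂‖ = ρ₂ := by rw [norm_smul_of_nonneg (hρ₁.trans h12).le, hθ₂, mul_one]
  have hx1 : ‖ρ₁ • θ₁‖ < 1 := by linarith
  have hy1 : ‖ρ₂ • θ₂‖ < 1 := by linarith
  have hxy : ‖ρ₁ • θ₁‖ < ‖ρ₂ • θ₂‖ := by linarith
  have hρp : 0 < ρp⁻¹ - ρp := by linarith [(one_lt_inv₀ h0).2 (by linarith)]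
  have hsep : (ρ₁⁻¹ - ρ₁) * dist (ρ₁ • θ₁) (ρ₂ • θ₂) ≤ (ρ₂ - ρ₁) * (ρp⁻¹ - ρp) := by
    refine le_of_sq_le_sq ?_ (mul_pos (sub_pos.2 h12) hρp).le
    rw [mul_pow, mul_pow, dist_sq_smul_smul_of_norm_eq (hθ₁.trans hθ₂.symm), hθ₁]
    linarith
  refine ⟨hyperbolicBisectorCenter (ρ₁ • θ₁) (ρ₂ • θ₂),
    hyperbolicBisectorRadius (ρ₁ • θ₁) (ρ₂ • θ₂), hyperbolicBisectorRadius_pos hx1 hy1 hxy.ne,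
    sq_norm_hyperbolicBisectorCenter hx1 hy1 hxy.ne, ?_, ?_⟩
  · exact le_norm_hyperbolicBisectorCenter_sub_radius h0 (by rwa [hx]) hxy hy1 (by rwa [hx, hy])
  · rw [← dist_eq_norm, ← div_pow]
    exact inversion_hyperbolicBisector hx1 hy1 hxy.ne
end
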